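/- Under the stated setup and assumptions, the approximate singular values satisfy σ_j(A) ≥ σ_j(QQ*A) ≥ σ_j(A) / √(1 + γ_j^{4q+2}·‖Ω_2Ω_1†‖₂²) for every j = 1,…,k, where σ_j(·) denotes the j-th largest singular value. -/

import Mathlib

open scoped ENNReal
open Matrix

/-- The `j`-th largest singular value (0-indexed) of a complex matrix,
obtained as the decreasingly sorted square roots of the eigenvalues of `Mᴴ * M`. -/
noncomputable def sval {m n : ℕ} (M : Matrix (Fin m) (Fin n) ℂ) (j : ℕ) : ℝ :=
  (List.insertionSort (· ≥ ·)
    ((List.ofFn (Matrix.isHermitian_conjTranspose_mul_self M).eigenvalues).map Real.sqrt)).getD j 0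

/-- The Schatten-`p` norm (`p = ∞` gives the spectral norm). -/
noncomputable def schatten {m n : ℕ} (p : ℝ≥0∞) (M : Matrix (Fin m) (Fin n) ℂ) : ℝ :=
  if p = ⊤ then sval M 0
  else (∑ j ∈ Finset.range n, sval M j ^ p.toReal) ^ (1 / p.toReal)

/-- Moore–Penrose pseudoinverse of a full-row-rank matrix. -/
noncomputable def rpinv {a b : ℕ} (M : Matrix (Fin a) (Fin b) ℂ) : Matrix (Fin b) (Fin a) ℂ :=
  Mᴴ * (M * Mᴴ)⁻¹

/-- Rectangular diagonal matrix with entries `σ (off), σ (off+1), …` on the diagonal. -/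
noncomputable def diagRect (σ : ℕ → ℝ) (off a b : ℕ) : Matrix (Fin a) (Fin b) ℂ :=
  Matrix.of fun i j => if (i : ℕ) = (j : ℕ) then (σ (off + (i : ℕ)) : ℂ) else 0

/-- The first `b` columns of a matrix with `b + c` columns. -/
def colsL {a b c : ℕ} (M : Matrix (Fin a) (Fin (b + c)) ℂ) : Matrix (Fin a) (Fin b) ℂ :=
  M.submatrix id (Fin.castAdd c)

/-- The last `c` columns of a matrix with `b + c` columns. -/
def colsR {a b c : ℕ} (M : Matrix (Fin a) (Fin (b + c)) ℂ) : Matrix (Fin a) (Fin c) ℂ :=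
  M.submatrix id (Fin.natAdd b)

/-!
By Eckart–Young, `σ_j(T)` is the distance from `T` to the maps of rank at most `j` (counting from
zero), whence `σ_j(MN) ≤ σ_j(M) ‖N‖` and `σ_j(MN) ≤ ‖M‖ σ_j(N)`. The upper bound is the case
`M = QQ*`, `N = A` of the second inequality.

For the lower bound put `Y = (AA*)^q A Ω` and `τ = σ ^ (2q+1)`, and let `Z` consist of the first
`j + 1` columns of `Y Ω₁† diag(τ₀, …, τ_{k-1})⁻¹`. Then `QQ* Z = Z`, and the `U_k`-component of `Z`
is `[I; 0]`, so `Z* (QQ* A) L = I` for `L = V_k [diag(σ₀, …, σ_j)⁻¹; 0]`. Hence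
`1 ≤ ‖Z‖ σ_j(QQ* A) ‖L‖ ≤ ‖Z‖ σ_j(QQ* A) / σ_j`. The `U_⊥`-component of `Z` has norm at most
`τ_k ‖Ω₂ Ω₁†‖ / τ_j`, so `‖Z‖² ≤ 1 + (σ_k / σ_j) ^ (4q+2) ‖Ω₂ Ω₁†‖²`.
-/

section

open Module
open scoped InnerProductSpace

variable {𝕜 E F : Type*} [RCLike 𝕜]
  [NormedAddCommGroup E] [InnerProductSpace 𝕜 E] [FiniteDimensional 𝕜 E]
  [NormedAddCommGroup F] [InnerProductSpace 𝕜 F] [FiniteDimensional 𝕜 F]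

/-- Right singular vectors of `T`, ordered so that `rightSingularBasis T i` belongs to
`T.singularValues i`. -/
noncomputable def rightSingularBasis (T : E →ₗ[𝕜] F) :
    OrthonormalBasis (Fin (finrank 𝕜 E)) 𝕜 E :=
  T.isSymmetric_adjoint_comp_self.eigenvectorBasis rfl

lemma norm_map_sq_eq_sum_singularValues (T : E →ₗ[𝕜] F) (x : E) :
    ‖T x‖ ^ 2 = ∑ i : Fin (finrank 𝕜 E),
      T.singularValues i ^ 2 * ‖⟪rightSingularBasis T i, x⟫_𝕜‖ ^ 2 := by
  have inner_basis (i : Fin (finrank 𝕜 E)) : ⟪rightSingularBasis T i, (T.adjoint ∘ₗ T) x⟫_𝕜 =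
      (T.singularValues i ^ 2 : ℝ) * ⟪rightSingularBasis T i, x⟫_𝕜 := by
    rw [T.sq_singularValues_fin rfl, ← OrthonormalBasis.repr_apply_apply,
      ← OrthonormalBasis.repr_apply_apply]
    exact T.isSymmetric_adjoint_comp_self.eigenvectorBasis_apply_self_apply rfl x i
  have inner_map : ⟪T x, T x⟫_𝕜 = ⟪x, (T.adjoint ∘ₗ T) x⟫_𝕜 := (T.adjoint_inner_right x (T x)).symm
  rw [← inner_self_eq_norm_sq (𝕜 := 𝕜), inner_map, ← (rightSingularBasis T).sum_inner_mul_inner,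
    map_sum]
  refine Finset.sum_congr rfl fun i _ => ?_
  rw [inner_basis, mul_left_comm, RCLike.re_ofReal_mul, inner_mul_symm_re_eq_norm, norm_mul,
    norm_inner_symm, sq ‖_‖]

lemma norm_map_le_of_forall_inner_eq_zero (T : E →ₗ[𝕜] F) {j : ℕ} {x : E}
    (hx : ∀ i : Fin (finrank 𝕜 E), i < j → ⟪rightSingularBasis T i, x⟫_𝕜 = 0) :
    ‖T x‖ ≤ T.singularValues j * ‖x‖ := by
  have hj := T.singularValues_nonneg j
  refine (sq_le_sq₀ (norm_nonneg _) (by positivity)).mp ?_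
  rw [mul_pow, norm_map_sq_eq_sum_singularValues,
    ← (rightSingularBasis T).sum_sq_norm_inner_right x, Finset.mul_sum]
  refine Finset.sum_le_sum fun i _ => ?_
  obtain hi | hi := lt_or_ge (i : ℕ) j
  · simp [hx i hi]
  · gcongr
    · exact T.singularValues_nonneg i
    · exact T.singularValues_antitone hi

lemma le_norm_map_of_forall_inner_eq_zero (T : E →ₗ[𝕜] F) {j : ℕ} {x : E}
    (hx : ∀ i : Fin (finrank 𝕜 E), j < i → ⟪rightSingularBasis T i, x⟫_𝕜 = 0) :
    T.singularValues j * ‖x‖ ≤ ‖T x‖ := by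
  have hj := T.singularValues_nonneg j
  refine (sq_le_sq₀ (by positivity) (norm_nonneg _)).mp ?_
  rw [mul_pow, norm_map_sq_eq_sum_singularValues,
    ← (rightSingularBasis T).sum_sq_norm_inner_right x, Finset.mul_sum]
  refine Finset.sum_le_sum fun i _ => ?_
  obtain hi | hi := lt_or_ge j (i : ℕ)
  · simp [hx i hi]
  · gcongr
    exact T.singularValues_antitone hi

theorem singularValues_le_norm_sub (T N : E →L[𝕜] F) {j : ℕ}
    (hN : finrank 𝕜 (N : E →ₗ[𝕜] F).range ≤ j) :
    (T : E →ₗ[𝕜] F).singularValues j ≤ ‖T - N‖ := by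
  obtain hj | hj := le_or_gt (finrank 𝕜 E) j
  · rw [LinearMap.singularValues_of_finrank_le _ hj]
    exact norm_nonneg _
  let b := rightSingularBasis (T : E →ₗ[𝕜] F)
  let top : Fin (j + 1) → E := b ∘ Fin.castLE hj
  let S := Submodule.span 𝕜 (Set.range top)
  have finrank_S : finrank 𝕜 S = j + 1 := by
    simpa using finrank_span_eq_card
      (b.orthonormal.linearIndependent.comp _ (Fin.castLE_injective hj))
  obtain ⟨⟨x, hxS⟩, hNx, hx⟩ := (Submodule.ne_bot_iff _).mp <|
    LinearMap.ker_ne_bot_of_finrank_lt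
      (f := (N : E →ₗ[𝕜] F).rangeRestrict ∘ₗ S.subtype) (by omega)
  replace hNx : N x = 0 := congrArg Subtype.val hNx
  replace hx : x ≠ 0 := fun h => hx (Subtype.ext h)
  have inner_eq_zero (i : Fin (finrank 𝕜 E)) (hi : j < i) : ⟪b i, x⟫_𝕜 = 0 := by
    refine Submodule.mem_orthogonal_singleton_iff_inner_right.mp
      ((Submodule.span_le (p := (𝕜 ∙ b i)ᗮ)).mpr ?_ hxS)
    rintro _ ⟨l, rfl⟩
    refine Submodule.mem_orthogonal_singleton_iff_inner_right.mpr (b.inner_eq_zero fun h => ?_)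
    have := l.is_lt
    simp only [h, Fin.val_castLE] at hi
    omega
  refine le_of_mul_le_mul_right ?_ (norm_pos_iff.mpr hx)
  calc (T : E →ₗ[𝕜] F).singularValues j * ‖x‖ ≤ ‖T x‖ :=
        le_norm_map_of_forall_inner_eq_zero _ inner_eq_zero
    _ = ‖(T - N) x‖ := by simp [hNx]
    _ ≤ ‖T - N‖ * ‖x‖ := (T - N).le_opNorm x

theorem exists_finrank_range_le_norm_sub_le (T : E →L[𝕜] F) (j : ℕ) :
    ∃ N : E →L[𝕜] F, finrank 𝕜 (N : E →ₗ[𝕜] F).range ≤ j ∧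
      ‖T - N‖ ≤ (T : E →ₗ[𝕜] F).singularValues j := by
  let b := rightSingularBasis (T : E →ₗ[𝕜] F)
  let top : Fin j → E := fun i => if h : i < finrank 𝕜 E then b ⟨i, h⟩ else 0
  let S := Submodule.span 𝕜 (Set.range top)
  refine ⟨T ∘L S.starProjection, ?_, ?_⟩
  · rw [ContinuousLinearMap.toLinearMap_comp, LinearMap.range_comp, Submodule.range_starProjection]
    exact (Submodule.finrank_map_le _ S).trans
      ((finrank_range_le_card top).trans_eq (Fintype.card_fin j))
  · refine ContinuousLinearMap.opNorm_le_bound _ (LinearMap.singularValues_nonneg _ _) fun x => ?_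
    have inner_eq_zero (i : Fin (finrank 𝕜 E)) (hi : i < j) : ⟪b i, Sᗮ.starProjection x⟫_𝕜 = 0 :=
      Submodule.inner_right_of_mem_orthogonal (K := S)
        (Submodule.subset_span ⟨⟨i, hi⟩, by simp [top]⟩) (Submodule.starProjection_apply_mem _ x)
    have := LinearMap.singularValues_nonneg (T : E →ₗ[𝕜] F) j
    calc ‖(T - T ∘L S.starProjection) x‖ = ‖T (Sᗮ.starProjection x)‖ := by
          simp [Submodule.starProjection_orthogonal_val]
      _ ≤ _ * ‖Sᗮ.starProjection x‖ := norm_map_le_of_forall_inner_eq_zero _ inner_eq_zero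
      _ ≤ _ * ‖x‖ := by grw [Submodule.norm_starProjection_apply_le]

end

section

open Module
open scoped Matrix.Norms.L2Operator

lemma insertionSort_ofFn_comp_perm {n : ℕ} {α : Type*} [LinearOrder α] {f : Fin n → α}
    (hf : Antitone f) (e : Equiv.Perm (Fin n)) :
    (List.ofFn (f ∘ e)).insertionSort (· ≥ ·) = List.ofFn f :=
  ((List.perm_insertionSort _ _).trans (e.ofFn_comp_perm f)).eq_of_sortedGE
    List.sortedGE_insertionSort hf.sortedGE_ofFn

lemma exists_perm_sqrt_eigenvalues_eq_singularValues {m n : ℕ} (M : Matrix (Fin m) (Fin n) ℂ) :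
    ∃ e : Equiv.Perm (Fin n), Real.sqrt ∘ (isHermitian_conjTranspose_mul_self M).eigenvalues =
      (fun i : Fin n => (toEuclideanLin M).singularValues i) ∘ e := by
  refine ⟨(Fintype.equivOfCardEq (Fintype.card_fin _)).symm.trans
    (finCongr (Fintype.card_fin n)), funext fun i => ?_⟩
  have gram : toEuclideanLin (Mᴴ * M) = (toEuclideanLin M).adjoint ∘ₗ toEuclideanLin M := by
    rw [← toEuclideanLin_conjTranspose_eq_adjoint]
    ext1 x
    simp
  simp only [Function.comp_apply, IsHermitian.eigenvalues, IsHermitian.eigenvalues₀, gram]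
  exact ((toEuclideanLin M).singularValues_fin finrank_euclideanSpace _).symm

theorem sval_eq_singularValues {m n : ℕ} (M : Matrix (Fin m) (Fin n) ℂ) (j : ℕ) :
    sval M j = (toEuclideanLin M).singularValues j := by
  obtain ⟨e, he⟩ := exists_perm_sqrt_eigenvalues_eq_singularValues M
  have sorted := insertionSort_ofFn_comp_perm
    (f := fun i : Fin n => (toEuclideanLin M).singularValues i)
    (fun i j hij => (toEuclideanLin M).singularValues_antitone hij) e
  rw [sval, List.map_ofFn, he, sorted]
  obtain hj | hj := lt_or_ge j n
  · simp [hj]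
  · rw [List.getD_eq_default _ _ (by simpa), LinearMap.singularValues_of_finrank_le _ (by simpa)]

section
variable {m n p : ℕ}

theorem sval_nonneg (M : Matrix (Fin m) (Fin n) ℂ) (j : ℕ) : 0 ≤ sval M j :=
  sval_eq_singularValues M j ▸ LinearMap.singularValues_nonneg _ _

lemma rank_eq_finrank_range_toEuclideanLin (M : Matrix (Fin m) (Fin n) ℂ) :
    M.rank = finrank ℂ (toEuclideanLin M).range := by
  rw [toEuclideanLin_eq_toLin_orthonormal]
  exact rank_eq_finrank_range_toLin M _ _

theorem sval_le_l2_opNorm_sub (M N : Matrix (Fin m) (Fin n) ℂ) {j : ℕ} (hN : N.rank ≤ j) :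
    sval M j ≤ ‖M - N‖ := by
  rw [sval_eq_singularValues, l2_opNorm_def, map_sub]
  exact singularValues_le_norm_sub (toEuclideanLin M).toContinuousLinearMap
    (toEuclideanLin N).toContinuousLinearMap (rank_eq_finrank_range_toEuclideanLin N ▸ hN)

theorem exists_rank_le_l2_opNorm_sub_le (M : Matrix (Fin m) (Fin n) ℂ) (j : ℕ) :
    ∃ N : Matrix (Fin m) (Fin n) ℂ, N.rank ≤ j ∧ ‖M - N‖ ≤ sval M j := by
  obtain ⟨N, hN, hMN⟩ :=
    exists_finrank_range_le_norm_sub_le (toEuclideanLin M).toContinuousLinearMap j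
  refine ⟨toEuclideanLin.symm N, ?_, ?_⟩
  · rwa [rank_eq_finrank_range_toEuclideanLin, LinearEquiv.apply_symm_apply]
  · rw [sval_eq_singularValues, l2_opNorm_def, map_sub]
    simp only [LinearEquiv.trans_apply, LinearEquiv.apply_symm_apply]
    exact hMN

theorem l2_opNorm_eq_sval_zero (M : Matrix (Fin m) (Fin n) ℂ) : ‖M‖ = sval M 0 := by
  refine le_antisymm ?_ (by simpa using sval_le_l2_opNorm_sub M 0 (j := 0) (by simp))
  rw [l2_opNorm_def]
  refine ContinuousLinearMap.opNorm_le_bound _ (sval_nonneg M 0) fun x => ?_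
  rw [sval_eq_singularValues]
  exact norm_map_le_of_forall_inner_eq_zero _ (by simp)

theorem sval_mul_le_sval_mul_l2_opNorm (M : Matrix (Fin m) (Fin n) ℂ)
    (N : Matrix (Fin n) (Fin p) ℂ) (j : ℕ) : sval (M * N) j ≤ sval M j * ‖N‖ := by
  obtain ⟨K, hK, hMK⟩ := exists_rank_le_l2_opNorm_sub_le M j
  calc sval (M * N) j ≤ ‖M * N - K * N‖ :=
        sval_le_l2_opNorm_sub _ _ ((rank_mul_le_left K N).trans hK)
    _ ≤ ‖M - K‖ * ‖N‖ := by rw [← Matrix.sub_mul]; exact l2_opNorm_mul _ _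
    _ ≤ sval M j * ‖N‖ := by gcongr

theorem sval_mul_le_l2_opNorm_mul_sval (M : Matrix (Fin m) (Fin n) ℂ)
    (N : Matrix (Fin n) (Fin p) ℂ) (j : ℕ) : sval (M * N) j ≤ ‖M‖ * sval N j := by
  obtain ⟨K, hK, hNK⟩ := exists_rank_le_l2_opNorm_sub_le N j
  calc sval (M * N) j ≤ ‖M * N - M * K‖ :=
        sval_le_l2_opNorm_sub _ _ ((rank_mul_le_right M K).trans hK)
    _ ≤ ‖M‖ * ‖N - K‖ := by rw [← Matrix.mul_sub]; exact l2_opNorm_mul _ _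
    _ ≤ ‖M‖ * sval N j := by gcongr

theorem one_le_sval_one {j : ℕ} (hj : j < n) : 1 ≤ sval (1 : Matrix (Fin n) (Fin n) ℂ) j := by
  obtain ⟨N, hN, h⟩ := exists_rank_le_l2_opNorm_sub_le (1 : Matrix (Fin n) (Fin n) ℂ) j
  by_contra! hlt
  have hunit : IsUnit N := by simpa using isUnit_one_sub_of_norm_lt_one (h.trans_lt hlt)
  have : N.rank = n := by simpa using rank_of_isUnit N hunit
  omega

lemma l2_opNorm_le_one_of_conjTranspose_mul_self {𝕜 ι κ : Type*} [RCLike 𝕜] [Fintype ι]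
    [Fintype κ] [DecidableEq κ] {M : Matrix ι κ 𝕜} (hM : Mᴴ * M = 1) : ‖M‖ ≤ 1 := by
  have gram := l2_opNorm_conjTranspose_mul_self M
  rw [hM, ← diagonal_one, l2_opNorm_diagonal] at gram
  have hone : ‖(fun _ => 1 : κ → 𝕜)‖ ≤ 1 :=
    (pi_norm_le_iff_of_nonneg zero_le_one).mpr fun _ => norm_one.le
  nlinarith [norm_nonneg M]

end

lemma isUnit_of_rank_eq_card {n K : Type*} [Fintype n] [DecidableEq n] [Field K]
    {M : Matrix n n K} (hM : M.rank = Fintype.card n) : IsUnit M :=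
  linearIndependent_rows_iff_isUnit.mp <| linearIndependent_iff_card_eq_finrank_span.mpr <| by
    rw [← hM, rank_eq_finrank_span_row, Set.finrank]

open scoped ComplexOrder in
theorem mul_rpinv {a b : ℕ} {M : Matrix (Fin a) (Fin b) ℂ} (hM : M.rank = a) :
    M * rpinv M = 1 := by
  have hunit : IsUnit (M * Mᴴ) :=
    isUnit_of_rank_eq_card (by rw [rank_self_mul_conjTranspose, hM, Fintype.card_fin])
  rw [rpinv, ← Matrix.mul_assoc, mul_nonsing_inv _ ((isUnit_iff_isUnit_det _).mp hunit)]

section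
variable {a b c : ℕ}

lemma conjTranspose_colsL_mul_colsL {U : Matrix (Fin a) (Fin (b + c)) ℂ} (hU : Uᴴ * U = 1) :
    (colsL U)ᴴ * colsL U = 1 := by
  rw [colsL, conjTranspose_submatrix, ← submatrix_mul _ _ _ _ _ Function.bijective_id, hU,
    submatrix_one _ (Fin.castAdd_injective b c)]

lemma conjTranspose_colsR_mul_colsR {U : Matrix (Fin a) (Fin (b + c)) ℂ} (hU : Uᴴ * U = 1) :
    (colsR U)ᴴ * colsR U = 1 := by
  rw [colsR, conjTranspose_submatrix, ← submatrix_mul _ _ _ _ _ Function.bijective_id, hU,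
    submatrix_one _ (Fin.natAdd_injective c b)]

lemma conjTranspose_colsL_mul_colsR {U : Matrix (Fin a) (Fin (b + c)) ℂ} (hU : Uᴴ * U = 1) :
    (colsL U)ᴴ * colsR U = 0 := by
  rw [colsL, colsR, conjTranspose_submatrix, ← submatrix_mul _ _ _ _ _ Function.bijective_id, hU]
  ext i j
  exact one_apply_ne fun h => by simp [Fin.ext_iff] at h; omega

lemma conjTranspose_colsR_mul_colsL {U : Matrix (Fin a) (Fin (b + c)) ℂ} (hU : Uᴴ * U = 1) :
    (colsR U)ᴴ * colsL U = 0 := by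
  simpa using congrArg conjTranspose (conjTranspose_colsL_mul_colsR hU)

lemma l2_opNorm_cols_mul_add_sq_le {r : ℕ} {U : Matrix (Fin a) (Fin (b + c)) ℂ} (hU : Uᴴ * U = 1)
    (F : Matrix (Fin b) (Fin r) ℂ) (G : Matrix (Fin c) (Fin r) ℂ) :
    ‖colsL U * F + colsR U * G‖ ^ 2 ≤ ‖F‖ ^ 2 + ‖G‖ ^ 2 := by
  have gram : (colsL U * F + colsR U * G)ᴴ * (colsL U * F + colsR U * G) = Fᴴ * F + Gᴴ * G := by
    simp only [conjTranspose_add, conjTranspose_mul, Matrix.add_mul, Matrix.mul_add,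
      Matrix.mul_assoc]
    simp only [← Matrix.mul_assoc (colsL U)ᴴ, ← Matrix.mul_assoc (colsR U)ᴴ,
      conjTranspose_colsL_mul_colsL hU, conjTranspose_colsR_mul_colsR hU,
      conjTranspose_colsL_mul_colsR hU, conjTranspose_colsR_mul_colsL hU]
    simp
  simp only [sq, ← l2_opNorm_conjTranspose_mul_self, gram]
  exact norm_add_le _ _

lemma mul_diagRect_mul_conjTranspose_eq_add {a' c' : ℕ} (σ : ℕ → ℝ) (off : ℕ)
    (U : Matrix (Fin a) (Fin (b + c)) ℂ) (V : Matrix (Fin a') (Fin (b + c')) ℂ) :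
    U * diagRect σ off (b + c) (b + c') * Vᴴ =
      colsL U * diagRect σ off b b * (colsL V)ᴴ +
      colsR U * diagRect σ (off + b) c c' * (colsR V)ᴴ := by
  have hLR (x : Fin b) (y : ℕ) : (x : ℕ) ≠ b + y := by omega
  have hRL (x : Fin b) (y : ℕ) : b + y ≠ (x : ℕ) := by omega
  ext i j
  simp [Matrix.mul_apply, Fin.sum_univ_add, colsL, colsR, diagRect, hLR, hRL, add_assoc]

end

section

lemma diagRect_mul_conjTranspose_self (σ : ℕ → ℝ) (off a b : ℕ) :
    diagRect σ off a b * (diagRect σ off a b)ᴴ =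
      diagonal fun i : Fin a => if (i : ℕ) < b then (σ (off + i) ^ 2 : ℂ) else 0 := by
  ext i l
  obtain hi | hi := lt_or_ge (i : ℕ) b
  · rw [Matrix.mul_apply, Finset.sum_eq_single ⟨i, hi⟩]
    · obtain rfl | h := eq_or_ne i l
      · simp [hi, diagRect, sq]
      · simp [diagRect, h, Fin.val_ne_of_ne h.symm]
    · intro x _ hx
      simp [diagRect, Fin.val_ne_of_ne hx.symm]
    · simp
  · have (x : Fin b) : (i : ℕ) ≠ x := by omega
    simp [Matrix.mul_apply, diagRect, this, diagonal_apply, hi.not_gt]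

lemma l2_opNorm_diagRect_le {σ : ℕ → ℝ} {off b : ℕ} {c : ℝ} (hc : 0 ≤ c) (a : ℕ)
    (hσ : ∀ i < b, |σ (off + i)| ≤ c) : ‖diagRect σ off a b‖ ≤ c := by
  have gram := l2_opNorm_conjTranspose_mul_self (diagRect σ off a b)ᴴ
  rw [conjTranspose_conjTranspose, diagRect_mul_conjTranspose_self, l2_opNorm_diagonal,
    l2_opNorm_conjTranspose, ← sq] at gram
  refine (sq_le_sq₀ (norm_nonneg _) hc).mp (gram ▸ (pi_norm_le_iff_of_nonneg (sq_nonneg c)).mpr ?_)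
  intro i
  split_ifs with hi
  · simpa using pow_le_pow_left₀ (abs_nonneg _) (hσ i hi) 2
  · simpa using sq_nonneg c

lemma l2_opNorm_diagRect_le_of_antitone {σ : ℕ → ℝ} (hσ : Antitone σ) (hσ0 : ∀ i, 0 ≤ σ i)
    (off a b : ℕ) : ‖diagRect σ off a b‖ ≤ σ off :=
  l2_opNorm_diagRect_le (hσ0 off) a fun i _ => by
    simpa only [abs_of_nonneg (hσ0 _)] using hσ (Nat.le_add_right off i)

lemma l2_opNorm_diagRect_inv_le {σ : ℕ → ℝ} (hσ : Antitone σ) {j : ℕ} (hσj : 0 < σ j) (a : ℕ) :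
    ‖diagRect σ⁻¹ 0 a (j + 1)‖ ≤ (σ j)⁻¹ := by
  refine l2_opNorm_diagRect_le (inv_nonneg.mpr hσj.le) a fun i hi => ?_
  have hji : σ j ≤ σ i := hσ (Nat.lt_succ_iff.mp hi)
  rw [zero_add, Pi.inv_apply, abs_of_pos (inv_pos.mpr (hσj.trans_le hji))]
  exact inv_anti₀ hσj hji

lemma diagRect_mul_conjTranspose_pow_mul (σ : ℕ → ℝ) (off a b q : ℕ) :
    (diagRect σ off a b * (diagRect σ off a b)ᴴ) ^ q * diagRect σ off a b =
      diagRect (σ ^ (2 * q + 1)) off a b := by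
  ext i j
  rw [diagRect_mul_conjTranspose_self, diagonal_pow, diagonal_mul]
  by_cases h : (i : ℕ) = j
  · simp [diagRect, h, pow_succ, pow_mul]
  · simp [diagRect, h]

lemma conjTranspose_diagRect (σ : ℕ → ℝ) (off a b : ℕ) :
    (diagRect σ off a b)ᴴ = diagRect σ off b a := by
  ext i j
  by_cases h : (i : ℕ) = j
  · simp [diagRect, h]
  · simp [diagRect, h, Ne.symm h]

lemma diagRect_mul_diagRect_inv {σ : ℕ → ℝ} {off b : ℕ} (a : ℕ) (hσ : ∀ i < b, σ (off + i) ≠ 0) :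
    diagRect σ off a a * diagRect σ⁻¹ off a b = diagRect 1 off a b := by
  have hdiag : diagRect σ off a a = diagonal fun i : Fin a => (σ (off + i) : ℂ) := by
    ext i j
    simp [diagRect, diagonal_apply, Fin.ext_iff]
  ext i j
  rw [hdiag, diagonal_mul]
  by_cases h : (i : ℕ) = j
  · simp [diagRect, h, hσ j j.2]
  · simp [diagRect, h]

lemma diagRect_one_conjTranspose_mul_self {a b : ℕ} (off : ℕ) (hba : b ≤ a) :
    (diagRect 1 off a b)ᴴ * diagRect 1 off a b = 1 := by
  have gram := diagRect_mul_conjTranspose_self 1 off b a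
  have hlt (i : Fin b) : (i : ℕ) < a := i.2.trans_le hba
  simpa [conjTranspose_diagRect, hlt] using gram

open scoped ComplexOrder in
lemma rank_diagRect_le {σ : ℕ → ℝ} {off j : ℕ} (a b : ℕ) (hσ : ∀ i ≥ j, σ (off + i) = 0) :
    (diagRect σ off a b).rank ≤ j := by
  rw [← rank_self_mul_conjTranspose, diagRect_mul_conjTranspose_self, rank_diagonal]
  have lt_of_ne_zero (i : Fin a)
      (hi : (if (i : ℕ) < b then (σ (off + i) ^ 2 : ℂ) else 0) ≠ 0) : (i : ℕ) < j := by
    by_contra! hji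
    simp [hσ i hji] at hi
  refine (Fintype.card_le_of_injective
    (fun i => (⟨i.1, lt_of_ne_zero i.1 i.2⟩ : Fin j)) fun x y hxy => ?_).trans_eq
      (Fintype.card_fin j)
  simpa [Subtype.ext_iff, Fin.ext_iff] using hxy

lemma sval_diagRect_le {σ : ℕ → ℝ} (hσ : Antitone σ) (hσ0 : ∀ i, 0 ≤ σ i) (a b j : ℕ) :
    sval (diagRect σ 0 a b) j ≤ σ j := by
  have tail : diagRect σ 0 a b - diagRect (fun i => if i < j then σ i else 0) 0 a b =
      diagRect (fun i => if i < j then 0 else σ i) 0 a b := by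
    ext i l
    simp only [diagRect, Matrix.sub_apply, of_apply, zero_add]
    split_ifs <;> simp
  calc sval (diagRect σ 0 a b) j
      ≤ ‖diagRect σ 0 a b - diagRect (fun i => if i < j then σ i else 0) 0 a b‖ :=
        sval_le_l2_opNorm_sub _ _ (rank_diagRect_le a b fun i hi => by simp [hi.not_gt])
    _ ≤ σ j := by
      rw [tail]
      refine l2_opNorm_diagRect_le (hσ0 j) a fun i _ => ?_
      split_ifs with h
      · simpa using hσ0 j
      · simpa [abs_of_nonneg (hσ0 i)] using hσ (not_lt.mp h)

end

section
variable {m n k m₂ n₂ : ℕ} {A : Matrix (Fin m) (Fin n) ℂ} {U : Matrix (Fin m) (Fin (k + m₂)) ℂ}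
  {V : Matrix (Fin n) (Fin (k + n₂)) ℂ} {σ : ℕ → ℝ}

lemma sval_le_of_svd (hU : Uᴴ * U = 1) (hV : Vᴴ * V = 1) (hσ : Antitone σ) (hσ0 : ∀ i, 0 ≤ σ i)
    (hA : A = U * diagRect σ 0 (k + m₂) (k + n₂) * Vᴴ) (j : ℕ) : sval A j ≤ σ j := by
  have hVnorm : ‖Vᴴ‖ ≤ 1 :=
    (l2_opNorm_conjTranspose V).trans_le (l2_opNorm_le_one_of_conjTranspose_mul_self hV)
  have hdiag := sval_nonneg (diagRect σ 0 (k + m₂) (k + n₂)) j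
  have hUdiag := sval_nonneg (U * diagRect σ 0 (k + m₂) (k + n₂)) j
  calc sval A j ≤ sval (U * diagRect σ 0 (k + m₂) (k + n₂)) j * ‖Vᴴ‖ :=
        hA ▸ sval_mul_le_sval_mul_l2_opNorm _ _ j
    _ ≤ sval (U * diagRect σ 0 (k + m₂) (k + n₂)) j := mul_le_of_le_one_right hUdiag hVnorm
    _ ≤ ‖U‖ * sval (diagRect σ 0 (k + m₂) (k + n₂)) j := sval_mul_le_l2_opNorm_mul_sval _ _ j
    _ ≤ sval (diagRect σ 0 (k + m₂) (k + n₂)) j :=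
        mul_le_of_le_one_left hdiag (l2_opNorm_le_one_of_conjTranspose_mul_self hU)
    _ ≤ σ j := sval_diagRect_le hσ hσ0 _ _ j

lemma mul_colsL_of_svd (hV : Vᴴ * V = 1) (hA : A = U * diagRect σ 0 (k + m₂) (k + n₂) * Vᴴ) :
    A * colsL V = colsL U * diagRect σ 0 k k := by
  rw [hA, mul_diagRect_mul_conjTranspose_eq_add, Matrix.add_mul, Matrix.mul_assoc _ (colsL V)ᴴ,
    Matrix.mul_assoc _ (colsR V)ᴴ, conjTranspose_colsL_mul_colsL hV,
    conjTranspose_colsR_mul_colsL hV, Matrix.mul_one, Matrix.mul_zero, add_zero]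

lemma le_l2_opNorm_mul_sval_of_svd (hV : Vᴴ * V = 1) (hσ : Antitone σ)
    (hA : A = U * diagRect σ 0 (k + m₂) (k + n₂) * Vᴴ)
    {P : Matrix (Fin m) (Fin m) ℂ} (hP : P.IsHermitian) {j : ℕ} (hj : j < k) (hσj : 0 < σ j)
    {Z : Matrix (Fin m) (Fin (j + 1)) ℂ} (hPZ : P * Z = Z)
    (hZU : (colsL U)ᴴ * Z = diagRect 1 0 k (j + 1)) : σ j ≤ ‖Z‖ * sval (P * A) j := by
  have hσne (i : ℕ) (hi : i < j + 1) : σ (0 + i) ≠ 0 := (hσj.trans_le (hσ (by omega))).ne'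
  let L := colsL V * diagRect σ⁻¹ 0 k (j + 1)
  have hL : ‖L‖ ≤ (σ j)⁻¹ := by
    calc ‖L‖ ≤ ‖colsL V‖ * ‖diagRect σ⁻¹ 0 k (j + 1)‖ := l2_opNorm_mul _ _
      _ ≤ 1 * (σ j)⁻¹ := by
        gcongr
        · exact l2_opNorm_le_one_of_conjTranspose_mul_self (conjTranspose_colsL_mul_colsL hV)
        · exact l2_opNorm_diagRect_inv_le hσ hσj k
      _ = (σ j)⁻¹ := one_mul _
  have hone : Zᴴ * (P * A) * L = 1 := by
    calc Zᴴ * (P * A) * L = (P * Z)ᴴ * (A * colsL V * diagRect σ⁻¹ 0 k (j + 1)) := by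
          simp only [L, conjTranspose_mul, hP.eq, Matrix.mul_assoc]
      _ = ((colsL U)ᴴ * Z)ᴴ * (diagRect σ 0 k k * diagRect σ⁻¹ 0 k (j + 1)) := by
          rw [hPZ, mul_colsL_of_svd hV hA, conjTranspose_mul, conjTranspose_conjTranspose]
          simp only [Matrix.mul_assoc]
      _ = 1 := by
          rw [hZU, diagRect_mul_diagRect_inv k hσne, diagRect_one_conjTranspose_mul_self 0 hj]
  have hs := sval_nonneg (P * A) j
  have hbound : 1 ≤ ‖Z‖ * sval (P * A) j * (σ j)⁻¹ := by
    calc 1 ≤ sval (Zᴴ * (P * A) * L) j := hone ▸ one_le_sval_one (Nat.lt_succ_self j)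
      _ ≤ sval (Zᴴ * (P * A)) j * ‖L‖ := sval_mul_le_sval_mul_l2_opNorm _ _ j
      _ ≤ ‖Zᴴ‖ * sval (P * A) j * (σ j)⁻¹ := by
        gcongr
        exact sval_mul_le_l2_opNorm_mul_sval _ _ j
      _ = ‖Z‖ * sval (P * A) j * (σ j)⁻¹ := by rw [l2_opNorm_conjTranspose]
  rwa [← div_eq_mul_inv, one_le_div hσj] at hbound

lemma mul_conjTranspose_pow_mul_of_svd (hU : Uᴴ * U = 1) (hV : Vᴴ * V = 1)
    (hA : A = U * diagRect σ 0 (k + m₂) (k + n₂) * Vᴴ) (q : ℕ) :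
    (A * Aᴴ) ^ q * A = U * diagRect (σ ^ (2 * q + 1)) 0 (k + m₂) (k + n₂) * Vᴴ := by
  rw [← diagRect_mul_conjTranspose_pow_mul]
  induction q with
  | zero => simpa using hA
  | succ q ih =>
    rw [pow_succ', Matrix.mul_assoc, ih, pow_succ', hA]
    simp only [conjTranspose_mul, conjTranspose_conjTranspose, Matrix.mul_assoc]
    rw [← Matrix.mul_assoc Vᴴ V, hV, Matrix.one_mul, ← Matrix.mul_assoc Uᴴ U, hU, Matrix.one_mul]

lemma mul_diagRect_mul_conjTranspose_mul_diagRect_inv {b : ℕ} {W : Matrix (Fin n) (Fin k) ℂ}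
    (hW : (colsL V)ᴴ * W = 1) (hσ : ∀ i < b, σ i ≠ 0) :
    U * diagRect σ 0 (k + m₂) (k + n₂) * Vᴴ * W * diagRect σ⁻¹ 0 k b =
      colsL U * diagRect 1 0 k b +
      colsR U * (diagRect σ k m₂ n₂ * ((colsR V)ᴴ * W) * diagRect σ⁻¹ 0 k b) := by
  rw [mul_diagRect_mul_conjTranspose_eq_add, Matrix.add_mul, Matrix.mul_assoc _ (colsL V)ᴴ, hW,
    Matrix.mul_one, Matrix.add_mul, Matrix.mul_assoc (colsL U),
    diagRect_mul_diagRect_inv k (by simpa only [zero_add] using hσ), zero_add]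
  simp only [Matrix.mul_assoc]

lemma l2_opNorm_colsL_add_colsR_sq_le (hU : Uᴴ * U = 1) (hσ : Antitone σ) (hσ0 : ∀ i, 0 ≤ σ i)
    {j : ℕ} (hj : j < k) (hσj : 0 < σ j) (B : Matrix (Fin n₂) (Fin k) ℂ) :
    ‖colsL U * diagRect 1 0 k (j + 1) +
        colsR U * (diagRect σ k m₂ n₂ * B * diagRect σ⁻¹ 0 k (j + 1))‖ ^ 2 ≤
      1 + (σ k / σ j) ^ 2 * ‖B‖ ^ 2 := by
  have hJ : ‖diagRect 1 0 k (j + 1)‖ ≤ 1 :=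
    l2_opNorm_le_one_of_conjTranspose_mul_self (diagRect_one_conjTranspose_mul_self 0 hj)
  have hk := hσ0 k
  have hH : ‖diagRect σ k m₂ n₂ * B * diagRect σ⁻¹ 0 k (j + 1)‖ ≤ σ k / σ j * ‖B‖ := by
    calc _ ≤ ‖diagRect σ k m₂ n₂‖ * ‖B‖ * ‖diagRect σ⁻¹ 0 k (j + 1)‖ :=
          (l2_opNorm_mul _ _).trans (by gcongr; exact l2_opNorm_mul _ _)
      _ ≤ σ k * ‖B‖ * (σ j)⁻¹ := by
        gcongr
        · exact l2_opNorm_diagRect_le_of_antitone hσ hσ0 k m₂ n₂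
        · exact l2_opNorm_diagRect_inv_le hσ hσj k
      _ = σ k / σ j * ‖B‖ := by ring
  calc _ ≤ _ := l2_opNorm_cols_mul_add_sq_le hU _ _
    _ ≤ 1 ^ 2 + (σ k / σ j * ‖B‖) ^ 2 := by gcongr
    _ = _ := by ring

lemma sval_mul_conjTranspose_mul_le {ℓ : ℕ} {Q : Matrix (Fin m) (Fin ℓ) ℂ} (hQ : Qᴴ * Q = 1)
    (A : Matrix (Fin m) (Fin n) ℂ) (j : ℕ) : sval (Q * Qᴴ * A) j ≤ sval A j := by
  have hQnorm := l2_opNorm_le_one_of_conjTranspose_mul_self hQ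
  have hproj : ‖Q * Qᴴ‖ ≤ 1 := (l2_opNorm_mul _ _).trans <|
    mul_le_one₀ hQnorm (norm_nonneg _) ((l2_opNorm_conjTranspose Q).trans_le hQnorm)
  exact (sval_mul_le_l2_opNorm_mul_sval _ _ j).trans
    (mul_le_of_le_one_left (sval_nonneg A j) hproj)

theorem le_sqrt_mul_sval_of_svd (hU : Uᴴ * U = 1) (hV : Vᴴ * V = 1) (hσ : Antitone σ)
    (hA : A = U * diagRect σ 0 (k + m₂) (k + n₂) * Vᴴ) {τ : ℕ → ℝ} (hτ : Antitone τ)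
    (hτ0 : ∀ i, 0 ≤ τ i) {W : Matrix (Fin n) (Fin k) ℂ} (hW : (colsL V)ᴴ * W = 1)
    {P : Matrix (Fin m) (Fin m) ℂ} (hP : P.IsHermitian)
    (hPW : P * (U * diagRect τ 0 (k + m₂) (k + n₂) * Vᴴ * W) =
      U * diagRect τ 0 (k + m₂) (k + n₂) * Vᴴ * W)
    {j : ℕ} (hj : j < k) (hσj : 0 < σ j) (hτj : 0 < τ j) :
    σ j ≤ √(1 + (τ k / τ j) ^ 2 * ‖(colsR V)ᴴ * W‖ ^ 2) * sval (P * A) j := by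
  let Z := U * diagRect τ 0 (k + m₂) (k + n₂) * Vᴴ * W * diagRect τ⁻¹ 0 k (j + 1)
  have hZ : Z = colsL U * diagRect 1 0 k (j + 1) +
      colsR U * (diagRect τ k m₂ n₂ * ((colsR V)ᴴ * W) * diagRect τ⁻¹ 0 k (j + 1)) :=
    mul_diagRect_mul_conjTranspose_mul_diagRect_inv hW fun i hi =>
      (hτj.trans_le (hτ (by omega))).ne'
  have hPZ : P * Z = Z := by rw [← Matrix.mul_assoc, hPW]
  have hZU : (colsL U)ᴴ * Z = diagRect 1 0 k (j + 1) := by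
    rw [hZ, Matrix.mul_add, ← Matrix.mul_assoc, ← Matrix.mul_assoc,
      conjTranspose_colsL_mul_colsL hU, conjTranspose_colsL_mul_colsR hU, Matrix.one_mul,
      Matrix.zero_mul, add_zero]
  have hZnorm : ‖Z‖ ≤ √(1 + (τ k / τ j) ^ 2 * ‖(colsR V)ᴴ * W‖ ^ 2) :=
    Real.le_sqrt_of_sq_le (hZ ▸ l2_opNorm_colsL_add_colsR_sq_le hU hτ hτ0 hj hτj _)
  exact (le_l2_opNorm_mul_sval_of_svd hV hσ hA hP hj hσj hPZ hZU).trans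
    (mul_le_mul_of_nonneg_right hZnorm (sval_nonneg _ j))

theorem singular_value_accuracy_general {p ℓ : ℕ} (q : ℕ)
    (hU : Uᴴ * U = 1) (hV : Vᴴ * V = 1) (hσ : Antitone σ) (hσ0 : ∀ i, 0 ≤ σ i)
    (hA : A = U * diagRect σ 0 (k + m₂) (k + n₂) * Vᴴ)
    {Ω : Matrix (Fin n) (Fin p) ℂ} {X : Matrix (Fin p) (Fin k) ℂ} (hX : (colsL V)ᴴ * Ω * X = 1)
    {Q : Matrix (Fin m) (Fin ℓ) ℂ} {R : Matrix (Fin ℓ) (Fin p) ℂ} (hQ : Qᴴ * Q = 1)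
    (hQR : (A * Aᴴ) ^ q * A * Ω = Q * R) {j : ℕ} (hj : j < k) (hσj : 0 < σ j) :
    sval (Q * Qᴴ * A) j ≤ σ j ∧
      σ j / √(1 + (σ k / σ j) ^ (4 * q + 2) * sval ((colsR V)ᴴ * Ω * X) 0 ^ 2) ≤
        sval (Q * Qᴴ * A) j := by
  refine ⟨(sval_mul_conjTranspose_mul_le hQ A j).trans (sval_le_of_svd hU hV hσ hσ0 hA j), ?_⟩
  have hpow : Antitone (σ ^ (2 * q + 1)) := fun a b hab => pow_le_pow_left₀ (hσ0 b) (hσ hab) _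
  have hfix : Q * Qᴴ * ((A * Aᴴ) ^ q * A * (Ω * X)) = (A * Aᴴ) ^ q * A * (Ω * X) := by
    rw [← Matrix.mul_assoc _ Ω, hQR]
    simp only [Matrix.mul_assoc, ← Matrix.mul_assoc Qᴴ Q, hQ, Matrix.one_mul]
  rw [mul_conjTranspose_pow_mul_of_svd hU hV hA] at hfix
  have hlower := le_sqrt_mul_sval_of_svd hU hV hσ hA hpow (fun i => pow_nonneg (hσ0 i) _)
    (by rwa [← Matrix.mul_assoc]) (isHermitian_mul_conjTranspose_self Q) hfix hj hσj
    (pow_pos hσj _)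
  have hexp : (2 * q + 1) * 2 = 4 * q + 2 := by ring
  simp only [Pi.pow_apply, ← div_pow, ← pow_mul, hexp, ← Matrix.mul_assoc,
    l2_opNorm_eq_sval_zero] at hlower
  exact div_le_of_le_mul₀ (Real.sqrt_nonneg _) (sval_nonneg _ j) (by rwa [mul_comm])

end

end

/-- Theorem 4.3: accuracy of the approximate singular values. -/
theorem singular_value_accuracy
    {k m₂ n₂ ρ : ℕ} (q : ℕ) (hk : 1 ≤ k)
    (A : Matrix (Fin (k + m₂)) (Fin (k + n₂)) ℂ)
    (U : Matrix (Fin (k + m₂)) (Fin (k + m₂)) ℂ)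
    (V : Matrix (Fin (k + n₂)) (Fin (k + n₂)) ℂ)
    (σ : ℕ → ℝ)
    (hU : Uᴴ * U = 1) (hU' : U * Uᴴ = 1)
    (hV : Vᴴ * V = 1) (hV' : V * Vᴴ = 1)
    (hσ0 : ∀ i, 0 ≤ σ i) (hσm : ∀ i j, i ≤ j → σ j ≤ σ i)
    (hA : A = U * diagRect σ 0 (k + m₂) (k + n₂) * Vᴴ)
    (hrank : 0 < σ (k - 1)) (hgap : σ k < σ (k - 1))
    (Ω : Matrix (Fin (k + n₂)) (Fin (k + ρ)) ℂ)
    (hΩ : ((colsL V)ᴴ * Ω).rank = k)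
    (Q : Matrix (Fin (k + m₂)) (Fin (k + ρ)) ℂ)
    (R : Matrix (Fin (k + ρ)) (Fin (k + ρ)) ℂ)
    (hQ : Qᴴ * Q = 1) (hR : R.BlockTriangular id)
    (hQR : (A * Aᴴ) ^ q * A * Ω = Q * R)
    :
    ∀ j : Fin k,
      sval (Q * Qᴴ * A) (j : ℕ) ≤ σ (j : ℕ) ∧
      σ (j : ℕ) / Real.sqrt (1 + (σ k / σ (j : ℕ)) ^ (4 * q + 2) * (sval ((colsR V)ᴴ * Ω * rpinv ((colsL V)ᴴ * Ω)) 0) ^ 2) ≤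
        sval (Q * Qᴴ * A) (j : ℕ) := by
  intro j
  have hσj : 0 < σ j := hrank.trans_le (hσm _ _ (by omega))
  exact singular_value_accuracy_general q hU hV (fun a b => hσm a b) hσ0 hA (mul_rpinv hΩ) hQ hQR
    j.is_lt hσj
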